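/- Let X be a word with d_X dominant loop blocks in its prefix decomposition, and let Y be a word with d_Y dominant loop blocks in its suffix decomposition. If the concatenation XY is in C, then d_X + d_Y ≤ D + 1. -/

import Mathlib

open Filter Asymptotics
open scoped Classical

/-- An embedding order on words over a weighted alphabet. -/
structure EmbeddingOrder (A : Type*) (w : A → ℕ) where
  le : List A → List A → Prop
  le_refl : ∀ W, le W W
  le_trans : ∀ {U V W}, le U V → le V W → le U W
  le_antisymm : ∀ {V W}, le V W → le W V → V = W
  nil_le : ∀ W, le [] W
  weight_lt : ∀ {W V}, le W V → W ≠ V → (W.map w).sum < (V.map w).sum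
  le_iff_factor : ∀ W V, le W V ↔ ∃ Ws : List (List A),
    Ws.length = V.length ∧ Ws.flatten = W ∧ ∀ q ∈ Ws.zip V, le q.1 [q.2]

namespace EmbeddingOrder

variable {A : Type*} {w : A → ℕ} (E : EmbeddingOrder A w) {f : ℕ} (φ : Fin f → List A)

/-- The weight of a word: the sum of the weights of its letters. -/
def wt (w : A → ℕ) (W : List A) : ℕ := (W.map w).sum

/-- The class `C = A* ∩ Av(φ¹,…,φ^f)` of all words avoiding every forbidden word. -/
def Cset : Set (List A) := {W | ∀ i, ¬ E.le (φ i) W}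

/-- The prefix state of `W`: its `i`-th component is the length of the longest prefix
of the forbidden word `φ i` contained in `W`. -/
noncomputable def pstate (W : List A) : Fin f → ℕ := fun i =>
  sSup {p | p ≤ (φ i).length ∧ E.le ((φ i).take p) W}

/-- The suffix state of `W`: its `i`-th component is the length of the longest suffix
of the forbidden word `φ i` contained in `W`. -/
noncomputable def sstate (W : List A) : Fin f → ℕ := fun i =>
  sSup {p | p ≤ (φ i).length ∧ E.le ((φ i).drop ((φ i).length - p)) W}

/-- A prefix state `p` and a suffix state `s` *overlap* if `p i + s i ≥ ℓ_i` for some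
`i` (equivalently, `XY ∉ C` whenever `X` has prefix state `p` and `Y` suffix state `s`);
otherwise they are *compatible*. -/
def POverlap (p s : Fin f → ℕ) : Prop := ∃ i, (φ i).length ≤ p i + s i

/-- The (prefix) loop alphabet of a state `p`: the letters whose appending does not
change the prefix state `p`. -/
def stateLoopP (p : Fin f → ℕ) : Set A :=
  {a | ∀ X : List A, E.pstate φ X = p → E.pstate φ (X ++ [a]) = p}

/-- The suffix loop alphabet of a state `s`: the letters whose prepending does not
change the suffix state `s`. -/
def stateLoopS (s : Fin f → ℕ) : Set A :=
  {a | ∀ Y : List A, E.sstate φ Y = s → E.sstate φ (a :: Y) = s}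

/-- `p'` is a *prefix successor* of `p`: `p' ≠ p` and some letter is a transition
symbol from `p` to `p'`. -/
def PSucc (p p' : Fin f → ℕ) : Prop :=
  p ≠ p' ∧ ∃ b : A, ∀ X : List A, E.pstate φ X = p → E.pstate φ (X ++ [b]) = p'

/-- `s'` is a *suffix successor* of `s`. -/
def SSucc (s s' : Fin f → ℕ) : Prop :=
  s ≠ s' ∧ ∃ b : A, ∀ Y : List A, E.sstate φ Y = s → E.sstate φ (b :: Y) = s'

/-- Compatible states `p` (prefix) and `s` (suffix) *match* if every prefix successor
of `p` overlaps with `s` and every suffix successor of `s` overlaps with `p`. -/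
def Matches (p s : Fin f → ℕ) : Prop :=
  ¬ POverlap φ p s ∧ (∀ p', E.PSucc φ p p' → POverlap φ p' s) ∧
    ∀ s', E.SSucc φ s s' → POverlap φ p s'

/-- `ρ(S)`: the unique positive root of `1 − Σ_{a∈S} x^{weight a}` for a nonempty set
`S` of letters (realised as a supremum). -/
noncomputable def rhoOf (w : A → ℕ) (S : Set A) : ℝ :=
  sSup {x : ℝ | 0 ≤ x ∧ ∑' a : S, x ^ w (a : A) ≤ 1}

/-- The growth rate of `S*`: the reciprocal `ρ(S)⁻¹` of the positive root of
`1 − Σ_{a∈S} x^{weight a}`. -/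
noncomputable def growthOf (w : A → ℕ) (S : Set A) : ℝ := (rhoOf w S)⁻¹

/-- The dominant growth rate `γ` of the class: the largest growth rate of the loop
alphabet of a (reachable) prefix state. -/
noncomputable def gammaC : ℝ :=
  sSup {g : ℝ | ∃ X ∈ E.Cset φ, g = growthOf w (E.stateLoopP φ (E.pstate φ X))}

/-- The number of dominant loop blocks (equivalently, dominant states) in the prefix
decomposition of `W`. -/
noncomputable def domCountP (W : List A) : ℕ :=
  Set.ncard {p : Fin f → ℕ | (∃ j ≤ W.length, E.pstate φ (W.take j) = p) ∧
    growthOf w (E.stateLoopP φ p) = E.gammaC φ}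

/-- The number of dominant loop blocks (equivalently, dominant states) in the suffix
decomposition of `W`. -/
noncomputable def domCountS (W : List A) : ℕ :=
  Set.ncard {s : Fin f → ℕ | (∃ j ≤ W.length, E.sstate φ (W.drop j) = s) ∧
    growthOf w (E.stateLoopS φ s) = E.gammaC φ}

/-- `D`: the largest number of dominant states appearing on a single prefix transition
path of a word of the class. -/
noncomputable def Dmax : ℕ := sSup {d : ℕ | ∃ W ∈ E.Cset φ, E.domCountP φ W = d}

end EmbeddingOrder

open EmbeddingOrder

/-!
Fix `X` and replace `Y` by a word `Y'` with the same suffix state, so that `XY'` is still in the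
class. To obtain `Y'`, insert at every position of `Y`, in front of a suffix `T`, a word over the
suffix loop alphabet of `T`. Such a word does not change the suffix state, and if it is long enough
then it drives every left-to-right scan into a prefix state at which that whole alphabet loops.
Growth rates are strictly monotone in the alphabet and `γ` is the largest one, so if `T` has a
dominant suffix state then the prefix state reached has exactly the same loop alphabet, and is
dominant too. Distinct dominant suffix states yield distinct prefix states: were the prefix state
the same at both places, the letters of `Y` between them would be loop symbols of it, hence of the
suffix state on the right, which therefore would not have changed either. So the part of the prefix
path of `XY'` from the state of `X` onwards has at least `d_Y` dominant states, of which only the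
first can lie on the prefix path of `X`.
-/

namespace EmbeddingOrder

section Growth

variable {A : Type*} {w : A → ℕ} {S T : Set A} {x : ℝ}

theorem growthOf_empty : growthOf w (∅ : Set A) = 0 := by
  have hunbdd : ¬ BddAbove {x : ℝ | 0 ≤ x ∧ ∑' a : (∅ : Set A), x ^ w (a : A) ≤ 1} := by
    simp only [tsum_empty, zero_le_one, and_true]
    exact not_bddAbove_Ici 0
  rw [growthOf, rhoOf, Real.sSup_of_not_bddAbove hunbdd, inv_zero]

theorem tsum_zero_pow (hw : ∀ a, 0 < w a) : ∑' a : S, (0 : ℝ) ^ w (a : A) = 0 := by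
  simp only [zero_pow (hw _).ne', tsum_zero]

variable [Finite A]

theorem continuous_tsum_pow (w : A → ℕ) (S : Set A) :
    Continuous fun x : ℝ => ∑' a : S, x ^ w (a : A) := by
  cases nonempty_fintype S
  simp only [tsum_fintype]
  fun_prop

theorem le_one_of_tsum_pow_le_one (hw : ∀ a, 0 < w a) (hS : S.Nonempty) (hx : 0 ≤ x)
    (hsum : ∑' a : S, x ^ w (a : A) ≤ 1) : x ≤ 1 := by
  obtain ⟨a, ha⟩ := hS
  refine (pow_le_one_iff_of_nonneg hx (hw a).ne').1 (LE.le.trans ?_ hsum)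
  exact (Summable.of_finite (f := fun b : S => x ^ w (b : A))).le_tsum ⟨a, ha⟩
    fun b _ => pow_nonneg hx _

theorem le_rhoOf (hw : ∀ a, 0 < w a) (hS : S.Nonempty) (hx : 0 ≤ x)
    (hsum : ∑' a : S, x ^ w (a : A) ≤ 1) : x ≤ rhoOf w S :=
  le_csSup ⟨1, fun _ hy => le_one_of_tsum_pow_le_one hw hS hy.1 hy.2⟩ ⟨hx, hsum⟩

theorem lt_rhoOf (hw : ∀ a, 0 < w a) (hS : S.Nonempty) (hx : 0 ≤ x)
    (hsum : ∑' a : S, x ^ w (a : A) < 1) : x < rhoOf w S := by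
  have hnear : ∀ᶠ y in nhdsWithin x (Set.Ioi x), ∑' a : S, y ^ w (a : A) < 1 :=
    nhdsWithin_le_nhds (((continuous_tsum_pow w S).tendsto x).eventually (gt_mem_nhds hsum))
  obtain ⟨y, hy, hxy⟩ := (hnear.and self_mem_nhdsWithin).exists
  exact lt_of_lt_of_le hxy (le_rhoOf hw hS (hx.trans (le_of_lt hxy)) hy.le)

theorem rhoOf_pos (hw : ∀ a, 0 < w a) (hS : S.Nonempty) : 0 < rhoOf w S :=
  lt_rhoOf hw hS le_rfl ((tsum_zero_pow hw).trans_lt one_pos)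

theorem tsum_rhoOf_pow_le_one (hw : ∀ a, 0 < w a) (hS : S.Nonempty) :
    ∑' a : S, rhoOf w S ^ w (a : A) ≤ 1 := by
  have hclosed : IsClosed {x : ℝ | 0 ≤ x ∧ ∑' a : S, x ^ w (a : A) ≤ 1} :=
    (isClosed_le continuous_const continuous_id).inter
      (isClosed_le (continuous_tsum_pow w S) continuous_const)
  exact (hclosed.csSup_mem ⟨0, le_rfl, (tsum_zero_pow hw).trans_le zero_le_one⟩
    ⟨1, fun _ hy => le_one_of_tsum_pow_le_one hw hS hy.1 hy.2⟩).2

theorem tsum_pow_lt_tsum_pow (hST : S ⊂ T) (hx : 0 < x) :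
    ∑' a : S, x ^ w (a : A) < ∑' a : T, x ^ w (a : A) := by
  obtain ⟨b, hbT, hbS⟩ := Set.exists_of_ssubset hST
  rw [tsum_subtype S fun a => x ^ w a, tsum_subtype T fun a => x ^ w a]
  refine Summable.tsum_lt_tsum (i := b) ?_ ?_ .of_finite .of_finite
  · exact Set.indicator_le_indicator_of_subset hST.subset fun a => by positivity
  · rw [Set.indicator_of_notMem hbS, Set.indicator_of_mem hbT]
    positivity

theorem growthOf_lt_growthOf (hw : ∀ a, 0 < w a) (hST : S ⊂ T) :
    growthOf w S < growthOf w T := by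
  have hT : T.Nonempty := (Set.exists_of_ssubset hST).imp fun _ h => h.1
  have hpos : 0 < rhoOf w T := rhoOf_pos hw hT
  rcases S.eq_empty_or_nonempty with rfl | hS
  · rw [growthOf_empty]
    exact inv_pos.2 hpos
  · refine inv_strictAnti₀ hpos (lt_rhoOf hw hS hpos.le ?_)
    exact (tsum_pow_lt_tsum_pow hST hpos).trans_le (tsum_rhoOf_pow_le_one hw hT)

end Growth

section Order

variable {A : Type*} {w : A → ℕ}

theorem weight_pos (E : EmbeddingOrder A w) (a : A) : 0 < w a := by
  simpa using E.weight_lt (E.nil_le [a]) (List.cons_ne_nil a []).symm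

variable (E : EmbeddingOrder A w)

theorem le_iff_forall₂ (W V : List A) :
    E.le W V ↔
      ∃ Ws : List (List A), List.Forall₂ (fun U a => E.le U [a]) Ws V ∧ Ws.flatten = W := by
  simp only [E.le_iff_factor W V, List.forall₂_iff_zip, Prod.forall, and_assoc,
    and_comm (a := _ = W)]

theorem le_append_iff (U X Y : List A) :
    E.le U (X ++ Y) ↔ ∃ U₁ U₂, U = U₁ ++ U₂ ∧ E.le U₁ X ∧ E.le U₂ Y := by
  constructor
  · intro h
    obtain ⟨Ws, hWs, rfl⟩ := (E.le_iff_forall₂ _ _).1 h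
    refine ⟨(Ws.take X.length).flatten, (Ws.drop X.length).flatten, ?_,
      (E.le_iff_forall₂ _ _).2 ⟨_, List.forall₂_take_append _ _ _ hWs, rfl⟩,
      (E.le_iff_forall₂ _ _).2 ⟨_, List.forall₂_drop_append _ _ _ hWs, rfl⟩⟩
    rw [← List.flatten_append, List.take_append_drop]
  · rintro ⟨U₁, U₂, rfl, hX, hY⟩
    obtain ⟨Ws₁, hWs₁, rfl⟩ := (E.le_iff_forall₂ _ _).1 hX
    obtain ⟨Ws₂, hWs₂, rfl⟩ := (E.le_iff_forall₂ _ _).1 hY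
    exact (E.le_iff_forall₂ _ _).2
      ⟨Ws₁ ++ Ws₂, List.rel_append hWs₁ hWs₂, List.flatten_append⟩

theorem le_append_left (X Y : List A) : E.le X (X ++ Y) :=
  (E.le_append_iff _ _ _).2 ⟨X, [], (List.append_nil X).symm, E.le_refl _, E.nil_le _⟩

theorem le_append_right (X Y : List A) : E.le Y (X ++ Y) :=
  (E.le_append_iff _ _ _).2 ⟨[], Y, rfl, E.nil_le _, E.le_refl _⟩

end Order

variable {A : Type*} {w : A → ℕ} (E : EmbeddingOrder A w) {f : ℕ} (φ : Fin f → List A)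

section States

theorem le_iff_length_le_pstate {U : List A} {i : Fin f} (hU : U <+: φ i) (W : List A) :
    E.le U W ↔ U.length ≤ E.pstate φ W i := by
  have hbdd : BddAbove {p | p ≤ (φ i).length ∧ E.le ((φ i).take p) W} :=
    ⟨_, fun p hp => hp.1⟩
  have hne : {p | p ≤ (φ i).length ∧ E.le ((φ i).take p) W}.Nonempty :=
    ⟨0, Nat.zero_le _, by simpa using E.nil_le W⟩
  have htake : U = (φ i).take U.length := List.prefix_iff_eq_take.1 hU
  refine ⟨fun h => le_csSup hbdd ⟨hU.length_le, htake ▸ h⟩, fun h => ?_⟩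
  obtain ⟨V, hV⟩ : U <+: (φ i).take (E.pstate φ W i) :=
    htake ▸ List.take_prefix_take_left h
  have hmax : E.le ((φ i).take (E.pstate φ W i)) W :=
    (Nat.sSup_mem hne hbdd).2
  exact E.le_trans (hV ▸ E.le_append_left U V) hmax

theorem le_iff_length_le_sstate {U : List A} {i : Fin f} (hU : U <:+ φ i) (W : List A) :
    E.le U W ↔ U.length ≤ E.sstate φ W i := by
  have hbdd : BddAbove {p | p ≤ (φ i).length ∧ E.le ((φ i).drop ((φ i).length - p)) W} :=
    ⟨_, fun p hp => hp.1⟩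
  have hne : {p | p ≤ (φ i).length ∧ E.le ((φ i).drop ((φ i).length - p)) W}.Nonempty :=
    ⟨0, Nat.zero_le _, by simpa using E.nil_le W⟩
  have hdrop : U = (φ i).drop ((φ i).length - U.length) := List.suffix_iff_eq_drop.1 hU
  refine ⟨fun h => le_csSup hbdd ⟨hU.length_le, hdrop ▸ h⟩, fun h => ?_⟩
  obtain ⟨V, hV⟩ : U <:+ (φ i).drop ((φ i).length - E.sstate φ W i) :=
    hdrop ▸ List.drop_suffix_drop_left _ (Nat.sub_le_sub_left h _)
  have hmax : E.le ((φ i).drop ((φ i).length - E.sstate φ W i)) W :=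
    (Nat.sSup_mem hne hbdd).2
  exact E.le_trans (hV ▸ E.le_append_right V U) hmax

theorem pstate_le_length (W : List A) (i : Fin f) : E.pstate φ W i ≤ (φ i).length :=
  csSup_le' fun _ hp => hp.1

theorem sstate_le_length (W : List A) (i : Fin f) : E.sstate φ W i ≤ (φ i).length :=
  csSup_le' fun _ hp => hp.1

theorem pstate_le_pstate_iff {W W' : List A} :
    E.pstate φ W ≤ E.pstate φ W' ↔ ∀ i U, U <+: φ i → E.le U W → E.le U W' := by
  refine ⟨fun h i U hU hW => ?_, fun h i => ?_⟩
  · rw [E.le_iff_length_le_pstate φ hU] at hW ⊢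
    exact hW.trans (h i)
  · have hU := List.take_prefix (E.pstate φ W i) (φ i)
    have := h i _ hU
    rwa [E.le_iff_length_le_pstate φ hU, E.le_iff_length_le_pstate φ hU, List.length_take_of_le
      (E.pstate_le_length φ W i), forall_prop_of_true le_rfl] at this

theorem sstate_le_sstate_iff {W W' : List A} :
    E.sstate φ W ≤ E.sstate φ W' ↔ ∀ i U, U <:+ φ i → E.le U W → E.le U W' := by
  refine ⟨fun h i U hU hW => ?_, fun h i => ?_⟩
  · rw [E.le_iff_length_le_sstate φ hU] at hW ⊢
    exact hW.trans (h i)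
  · have hU := List.drop_suffix ((φ i).length - E.sstate φ W i) (φ i)
    have := h i _ hU
    rwa [E.le_iff_length_le_sstate φ hU, E.le_iff_length_le_sstate φ hU, List.length_drop,
      Nat.sub_sub_self (E.sstate_le_length φ W i), forall_prop_of_true le_rfl] at this

theorem pstate_le_pstate_append (W V : List A) : E.pstate φ W ≤ E.pstate φ (W ++ V) :=
  (E.pstate_le_pstate_iff φ).2 fun _ _ _ h => E.le_trans h (E.le_append_left W V)

theorem pstate_append_mono {W W' : List A} (V : List A) (h : E.pstate φ W ≤ E.pstate φ W') :
    E.pstate φ (W ++ V) ≤ E.pstate φ (W' ++ V) := by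
  refine (E.pstate_le_pstate_iff φ).2 fun i U hU hle => ?_
  obtain ⟨U₁, U₂, rfl, hW, hV⟩ := (E.le_append_iff _ _ _).1 hle
  have hU₁ : U₁ <+: φ i := (List.prefix_append U₁ U₂).trans hU
  exact (E.le_append_iff _ _ _).2 ⟨U₁, U₂, rfl, (E.pstate_le_pstate_iff φ).1 h i U₁ hU₁ hW, hV⟩

theorem le_append_of_sstate_le {W W' U : List A} {i : Fin f} (V : List A) (hU : U <:+ φ i)
    (h : E.sstate φ W ≤ E.sstate φ W') (hle : E.le U (V ++ W)) : E.le U (V ++ W') := by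
  obtain ⟨U₁, U₂, rfl, hV, hW⟩ := (E.le_append_iff _ _ _).1 hle
  have hU₂ : U₂ <:+ φ i := (List.suffix_append U₁ U₂).trans hU
  exact (E.le_append_iff _ _ _).2 ⟨U₁, U₂, rfl, hV, (E.sstate_le_sstate_iff φ).1 h i U₂ hU₂ hW⟩

theorem pstate_append_congr {W W' : List A} (V : List A) (h : E.pstate φ W = E.pstate φ W') :
    E.pstate φ (W ++ V) = E.pstate φ (W' ++ V) :=
  (E.pstate_append_mono φ V h.le).antisymm (E.pstate_append_mono φ V h.ge)

theorem sstate_append_congr {W W' : List A} (V : List A) (h : E.sstate φ W = E.sstate φ W') :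
    E.sstate φ (V ++ W) = E.sstate φ (V ++ W') :=
  ((E.sstate_le_sstate_iff φ).2 fun _ _ hU => E.le_append_of_sstate_le φ V hU h.le).antisymm
    ((E.sstate_le_sstate_iff φ).2 fun _ _ hU => E.le_append_of_sstate_le φ V hU h.ge)

variable {φ} in
theorem mem_Cset_of_append {X Y : List A} (h : X ++ Y ∈ E.Cset φ) : X ∈ E.Cset φ :=
  fun i hi => h i (E.le_trans hi (E.le_append_left X Y))

variable {φ} in
theorem append_mem_Cset_of_sstate_eq {X Y Y' : List A} (h : E.sstate φ Y' = E.sstate φ Y)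
    (hXY : X ++ Y ∈ E.Cset φ) : X ++ Y' ∈ E.Cset φ :=
  fun i hi => hXY i (E.le_append_of_sstate_le φ X List.suffix_rfl h.le hi)

end States

section Loops

theorem mem_stateLoopP_pstate_iff (W : List A) (a : A) :
    a ∈ E.stateLoopP φ (E.pstate φ W) ↔ E.pstate φ (W ++ [a]) = E.pstate φ W :=
  ⟨fun h => h W rfl, fun h _ hW' => (E.pstate_append_congr φ [a] hW').trans h⟩

theorem pstate_append_eq_self_iff (W B : List A) :
    E.pstate φ (W ++ B) = E.pstate φ W ↔ ∀ a ∈ B, a ∈ E.stateLoopP φ (E.pstate φ W) := by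
  induction B using List.reverseRecOn with
  | nil => simp
  | append_singleton B a ih =>
    simp only [← List.append_assoc, List.forall_mem_append, List.forall_mem_singleton]
    constructor
    · intro h
      have hB : E.pstate φ (W ++ B) = E.pstate φ W :=
        (h ▸ E.pstate_le_pstate_append φ (W ++ B) [a]).antisymm (E.pstate_le_pstate_append φ W B)
      exact ⟨ih.1 hB, hB ▸ (E.mem_stateLoopP_pstate_iff φ (W ++ B) a).2 (h.trans hB.symm)⟩
    · rintro ⟨hB, ha⟩
      exact ha (W ++ B) (ih.2 hB)

theorem sstate_append_eq_self {B W : List A} (h : ∀ a ∈ B, a ∈ E.stateLoopS φ (E.sstate φ W)) :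
    E.sstate φ (B ++ W) = E.sstate φ W := by
  induction B with
  | nil => rfl
  | cons a B ih =>
    rw [List.forall_mem_cons] at h
    exact h.1 (B ++ W) (ih h.2)

theorem exists_word_subset_stateLoopP_or_le_sum {S : Set A} (hS : S.Finite) (n : ℕ) :
    ∃ B : List A, (∀ a ∈ B, a ∈ S) ∧ ∀ Z, S ⊆ E.stateLoopP φ (E.pstate φ (Z ++ B)) ∨
      n ≤ ∑ i, E.pstate φ (Z ++ B) i := by
  induction n with
  | zero => exact ⟨[], by simp, fun Z => .inr (Nat.zero_le _)⟩
  | succ n ih =>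
    obtain ⟨B, hBS, hB⟩ := ih
    have hlist : ∀ a, a ∈ hS.toFinset.toList ↔ a ∈ S := by simp
    refine ⟨B ++ hS.toFinset.toList, ?_, fun Z => ?_⟩
    · exact List.forall_mem_append.2 ⟨hBS, fun a => (hlist a).1⟩
    rw [← List.append_assoc]
    by_cases hloop : S ⊆ E.stateLoopP φ (E.pstate φ (Z ++ B))
    · left
      rwa [(E.pstate_append_eq_self_iff φ (Z ++ B) _).2 fun a ha => hloop ((hlist a).1 ha)]
    · right
      refine ((hB Z).resolve_left hloop).trans_lt (Fintype.sum_strictMono ?_)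
      refine (E.pstate_le_pstate_append φ (Z ++ B) _).lt_of_ne fun heq => hloop fun a ha => ?_
      exact (E.pstate_append_eq_self_iff φ (Z ++ B) _).1 heq.symm a ((hlist a).2 ha)

theorem exists_word_subset_stateLoopP {S : Set A} (hS : S.Finite) :
    ∃ B : List A, (∀ a ∈ B, a ∈ S) ∧ ∀ Z, S ⊆ E.stateLoopP φ (E.pstate φ (Z ++ B)) := by
  obtain ⟨B, hBS, hB⟩ :=
    E.exists_word_subset_stateLoopP_or_le_sum φ hS (∑ i, (φ i).length + 1)
  refine ⟨B, hBS, fun Z => (hB Z).resolve_right (not_le.2 (Nat.lt_succ_of_le ?_))⟩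
  exact Finset.sum_le_sum fun i _ => E.pstate_le_length φ (Z ++ B) i

end Loops

section Dominant

/-- The dominant prefix states of a word; `domCountP` is their number. -/
def dominantP (W : List A) : Set (Fin f → ℕ) :=
  {p | (∃ V, V <+: W ∧ E.pstate φ V = p) ∧ growthOf w (E.stateLoopP φ p) = E.gammaC φ}

/-- The dominant suffix states of a word; `domCountS` is their number. -/
def dominantS (W : List A) : Set (Fin f → ℕ) :=
  {s | (∃ V, V <:+ W ∧ E.sstate φ V = s) ∧ growthOf w (E.stateLoopS φ s) = E.gammaC φ}

theorem domCountP_eq_ncard (W : List A) : E.domCountP φ W = (E.dominantP φ W).ncard := by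
  refine congrArg Set.ncard (Set.ext fun p => and_congr_left fun _ => ⟨?_, ?_⟩)
  · rintro ⟨j, -, h⟩
    exact ⟨_, List.take_prefix j W, h⟩
  · rintro ⟨V, hV, h⟩
    exact ⟨V.length, hV.length_le, by rwa [← List.prefix_iff_eq_take.1 hV]⟩

theorem domCountS_eq_ncard (W : List A) : E.domCountS φ W = (E.dominantS φ W).ncard := by
  refine congrArg Set.ncard (Set.ext fun s => and_congr_left fun _ => ⟨?_, ?_⟩)
  · rintro ⟨j, -, h⟩
    exact ⟨_, List.drop_suffix j W, h⟩
  · rintro ⟨V, hV, h⟩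
    exact ⟨W.length - V.length, Nat.sub_le _ _, by rwa [← List.suffix_iff_eq_drop.1 hV]⟩

theorem dominantP_subset_Iic (W : List A) :
    E.dominantP φ W ⊆ Set.Iic fun i => (φ i).length := by
  rintro _ ⟨⟨V, -, rfl⟩, -⟩
  exact E.pstate_le_length φ V

theorem finite_dominantP (W : List A) : (E.dominantP φ W).Finite :=
  (Set.finite_Iic _).subset (E.dominantP_subset_Iic φ W)

theorem dominantP_subset_of_prefix {V W : List A} (h : V <+: W) :
    E.dominantP φ V ⊆ E.dominantP φ W :=
  fun _ ⟨⟨U, hU, hp⟩, hdom⟩ => ⟨⟨U, hU.trans h, hp⟩, hdom⟩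

theorem ncard_dominantP_add_ncard_le {X W : List A} {P : Set (Fin f → ℕ)} (hXW : X <+: W)
    (hP : P ⊆ E.dominantP φ W) (hle : ∀ p ∈ P, E.pstate φ X ≤ p) :
    (E.dominantP φ X).ncard + P.ncard ≤ (E.dominantP φ W).ncard + 1 := by
  have hunion : E.dominantP φ X ∪ P ⊆ E.dominantP φ W :=
    Set.union_subset (E.dominantP_subset_of_prefix φ hXW) hP
  have hinter : E.dominantP φ X ∩ P ⊆ {E.pstate φ X} := by
    rintro _ ⟨⟨⟨V, ⟨V', rfl⟩, rfl⟩, -⟩, hp⟩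
    exact (E.pstate_le_pstate_append φ V V').antisymm (hle _ hp)
  have hfin := E.finite_dominantP φ W
  rw [← Set.ncard_union_add_ncard_inter _ _ (E.finite_dominantP φ X) (hfin.subset hP),
    ← Set.ncard_singleton (E.pstate φ X)]
  exact add_le_add (Set.ncard_le_ncard hunion hfin) (Set.ncard_le_ncard hinter)

variable {φ} in
theorem domCountP_le_Dmax {W : List A} (hW : W ∈ E.Cset φ) : E.domCountP φ W ≤ E.Dmax φ := by
  refine le_csSup ⟨(Set.Iic fun i => (φ i).length).ncard, ?_⟩ ⟨W, hW, rfl⟩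
  rintro _ ⟨V, -, rfl⟩
  rw [domCountP_eq_ncard]
  exact Set.ncard_le_ncard (E.dominantP_subset_Iic φ V) (Set.finite_Iic _)

variable [Finite A]

variable {φ} in
theorem growthOf_stateLoopP_le_gammaC {X : List A} (hX : X ∈ E.Cset φ) :
    growthOf w (E.stateLoopP φ (E.pstate φ X)) ≤ E.gammaC φ := by
  refine le_csSup ((Set.finite_range (growthOf w)).subset ?_).bddAbove ⟨X, hX, rfl⟩
  rintro _ ⟨W, -, rfl⟩
  exact Set.mem_range_self _

variable {φ} in
theorem eq_stateLoopP_of_subset {X : List A} (hX : X ∈ E.Cset φ) {S : Set A}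
    (hS : growthOf w S = E.gammaC φ) (hsub : S ⊆ E.stateLoopP φ (E.pstate φ X)) :
    S = E.stateLoopP φ (E.pstate φ X) := by
  by_contra hne
  have hlt := growthOf_lt_growthOf E.weight_pos (hsub.ssubset_of_ne hne)
  exact (hS ▸ hlt).not_ge (E.growthOf_stateLoopP_le_gammaC hX)

end Dominant

section Padding

variable [Finite A]

/-- A word over the suffix loop alphabet of `T` after which, whatever was read before, every letter
of that alphabet is a loop symbol of the prefix state. -/
noncomputable def loopBlock (T : List A) : List A :=
  (E.exists_word_subset_stateLoopP φ (E.stateLoopS φ (E.sstate φ T)).toFinite).choose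

/-- The word `U` with, after each of its letters, the loop block of what follows in `U ++ T`. -/
noncomputable def pad : List A → List A → List A
  | [], _ => []
  | a :: U, T => a :: (E.loopBlock φ (U ++ T) ++ pad U T)

/-- The prefix state at the junction of `U` and `T` when `X ++ (U ++ T)` is scanned with loop blocks
inserted in front of `T` and of every longer suffix of `U ++ T`. -/
noncomputable def paddedState (X U T : List A) : Fin f → ℕ :=
  E.pstate φ (X ++ E.loopBlock φ (U ++ T) ++ E.pad φ U T)

theorem sstate_loopBlock_append {T T' : List A} (h : E.sstate φ T' = E.sstate φ T) :
    E.sstate φ (E.loopBlock φ T ++ T') = E.sstate φ T := by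
  refine (E.sstate_append_eq_self φ fun a ha => ?_).trans h
  rw [h]
  exact (E.exists_word_subset_stateLoopP φ (Set.toFinite _)).choose_spec.1 a ha

theorem stateLoopS_subset_stateLoopP_loopBlock (Z T : List A) :
    E.stateLoopS φ (E.sstate φ T) ⊆ E.stateLoopP φ (E.pstate φ (Z ++ E.loopBlock φ T)) :=
  (E.exists_word_subset_stateLoopP φ (Set.toFinite _)).choose_spec.2 Z

theorem pad_append (U V T : List A) :
    E.pad φ (U ++ V) T = E.pad φ U (V ++ T) ++ E.pad φ V T := by
  induction U with
  | nil => rfl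
  | cons a U ih => simp only [List.cons_append, pad, ih, List.append_assoc]

theorem subset_pad (U T : List A) : U ⊆ E.pad φ U T := by
  induction U with
  | nil => exact List.nil_subset _
  | cons a U ih =>
    exact List.cons_subset_cons a (List.Subset.trans ih (List.subset_append_right _ _))

theorem sstate_pad_append (U T : List A) :
    E.sstate φ (E.pad φ U T ++ T) = E.sstate φ (U ++ T) := by
  induction U with
  | nil => rfl
  | cons a U ih =>
    rw [pad, List.cons_append, List.append_assoc]
    exact E.sstate_append_congr φ [a] (E.sstate_loopBlock_append φ ih)

theorem stateLoopS_subset_stateLoopP_paddedState (X U T : List A) :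
    E.stateLoopS φ (E.sstate φ T) ⊆ E.stateLoopP φ (E.paddedState φ X U T) := by
  induction U generalizing X with
  | nil => simpa [paddedState, pad] using E.stateLoopS_subset_stateLoopP_loopBlock φ X T
  | cons a U ih => simpa [paddedState, pad] using ih (X ++ E.loopBlock φ (a :: U ++ T) ++ [a])

theorem pstate_le_paddedState (X U T : List A) : E.pstate φ X ≤ E.paddedState φ X U T := by
  rw [paddedState, List.append_assoc]
  exact E.pstate_le_pstate_append φ X _

variable {φ} {X U T : List A}

theorem append_pad_mem_Cset (h : X ++ (U ++ T) ∈ E.Cset φ) :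
    X ++ E.loopBlock φ (U ++ T) ++ E.pad φ U T ++ T ∈ E.Cset φ := by
  simp only [List.append_assoc]
  exact E.append_mem_Cset_of_sstate_eq
    (E.sstate_loopBlock_append φ (E.sstate_pad_append φ U T)) h

theorem stateLoopP_paddedState (h : X ++ (U ++ T) ∈ E.Cset φ)
    (hT : growthOf w (E.stateLoopS φ (E.sstate φ T)) = E.gammaC φ) :
    E.stateLoopP φ (E.paddedState φ X U T) = E.stateLoopS φ (E.sstate φ T) :=
  (E.eq_stateLoopP_of_subset (E.mem_Cset_of_append (E.append_pad_mem_Cset h)) hT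
    (E.stateLoopS_subset_stateLoopP_paddedState φ X U T)).symm

theorem paddedState_mem_dominantP (h : X ++ (U ++ T) ∈ E.Cset φ)
    (hT : growthOf w (E.stateLoopS φ (E.sstate φ T)) = E.gammaC φ) :
    E.paddedState φ X U T ∈
      E.dominantP φ (X ++ (E.loopBlock φ (U ++ T) ++ E.pad φ (U ++ T) [])) := by
  refine ⟨⟨_, ?_, rfl⟩, (congrArg (growthOf w) (E.stateLoopP_paddedState h hT)).trans hT⟩
  rw [pad_append, List.append_nil, ← List.append_assoc, ← List.append_assoc]
  exact List.prefix_append _ _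

theorem sstate_append_eq_of_paddedState_eq {V : List A} (h : X ++ (U ++ V ++ T) ∈ E.Cset φ)
    (hT : growthOf w (E.stateLoopS φ (E.sstate φ T)) = E.gammaC φ)
    (heq : E.paddedState φ X (U ++ V) T = E.paddedState φ X U (V ++ T)) :
    E.sstate φ (V ++ T) = E.sstate φ T := by
  have hloop : ∀ a ∈ E.pad φ V T, a ∈ E.stateLoopP φ (E.paddedState φ X U (V ++ T)) := by
    refine (E.pstate_append_eq_self_iff φ _ _).1 (Eq.trans ?_ heq)
    simp only [paddedState, pad_append, List.append_assoc]
  rw [← heq, E.stateLoopP_paddedState h hT] at hloop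
  exact E.sstate_append_eq_self φ fun a ha => hloop a (E.subset_pad φ V T ha)

theorem sstate_eq_of_paddedState_eq {U' T' : List A} (hY : U ++ T = U' ++ T')
    (h : X ++ (U ++ T) ∈ E.Cset φ)
    (hT : growthOf w (E.stateLoopS φ (E.sstate φ T)) = E.gammaC φ)
    (hT' : growthOf w (E.stateLoopS φ (E.sstate φ T')) = E.gammaC φ)
    (heq : E.paddedState φ X U T = E.paddedState φ X U' T') :
    E.sstate φ T = E.sstate φ T' := by
  rcases List.append_eq_append_iff.1 hY with ⟨V, rfl, rfl⟩ | ⟨V, rfl, rfl⟩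
  · exact E.sstate_append_eq_of_paddedState_eq (hY ▸ h) hT' heq.symm
  · exact (E.sstate_append_eq_of_paddedState_eq h hT heq).symm

theorem exists_injOn_dominantS {Y : List A} (h : X ++ Y ∈ E.Cset φ) :
    ∃ g : (Fin f → ℕ) → (Fin f → ℕ), Set.InjOn g (E.dominantS φ Y) ∧
      ∀ s ∈ E.dominantS φ Y, g s ∈ E.dominantP φ (X ++ (E.loopBlock φ Y ++ E.pad φ Y [])) ∧
        E.pstate φ X ≤ g s := by
  have hsplit : ∀ s ∈ E.dominantS φ Y, ∃ U T, U ++ T = Y ∧ E.sstate φ T = s := by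
    rintro s ⟨⟨T, ⟨U, hUT⟩, hs⟩, -⟩
    exact ⟨U, T, hUT, hs⟩
  choose! U T hY hs using hsplit
  have hdom : ∀ s ∈ E.dominantS φ Y,
      growthOf w (E.stateLoopS φ (E.sstate φ (T s))) = E.gammaC φ :=
    fun s hmem => (hs s hmem).symm ▸ hmem.2
  have hC : ∀ s ∈ E.dominantS φ Y, X ++ (U s ++ T s) ∈ E.Cset φ :=
    fun s hmem => (hY s hmem).symm ▸ h
  refine ⟨fun s => E.paddedState φ X (U s) (T s), fun s hmem s' hmem' heq => ?_, fun s hmem => ?_⟩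
  · rw [← hs s hmem, ← hs s' hmem']
    exact E.sstate_eq_of_paddedState_eq ((hY s hmem).trans (hY s' hmem').symm) (hC s hmem)
      (hdom s hmem) (hdom s' hmem') heq
  · have hvisit := E.paddedState_mem_dominantP (hC s hmem) (hdom s hmem)
    rw [hY s hmem] at hvisit
    exact ⟨hvisit, E.pstate_le_paddedState φ X (U s) (T s)⟩

end Padding

end EmbeddingOrder

theorem domCount_concat_le_general {A : Type*} [Finite A] {w : A → ℕ}
    (E : EmbeddingOrder A w) {f : ℕ} (φ : Fin f → List A)
    (X Y : List A) (hXY : X ++ Y ∈ E.Cset φ) :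
    E.domCountP φ X + E.domCountS φ Y ≤ E.Dmax φ + 1 := by
  obtain ⟨g, hinj, hg⟩ := E.exists_injOn_dominantS hXY
  set W := X ++ (E.loopBlock φ Y ++ E.pad φ Y []) with hW
  have hWC : W ∈ E.Cset φ := by
    simpa [hW] using E.append_pad_mem_Cset (U := Y) (T := []) (by simpa using hXY)
  calc
    E.domCountP φ X + E.domCountS φ Y
      = (E.dominantP φ X).ncard + (g '' E.dominantS φ Y).ncard := by
        rw [domCountP_eq_ncard, domCountS_eq_ncard, hinj.ncard_image]
    _ ≤ (E.dominantP φ W).ncard + 1 :=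
        E.ncard_dominantP_add_ncard_le φ (List.prefix_append X _)
          (Set.image_subset_iff.2 fun s hs => (hg s hs).1)
          (Set.forall_mem_image.2 fun s hs => (hg s hs).2)
    _ = E.domCountP φ W + 1 := by rw [domCountP_eq_ncard]
    _ ≤ E.Dmax φ + 1 := Nat.add_le_add_right (E.domCountP_le_Dmax hWC) 1

/-- **Lemma `lem-xydom`.**  (Setting: a permutation class with finitely many
sum-indecomposable permutations, unbounded growth function and not sum-closed,
identified with the set `C = A* ∩ Av(φ¹,…,φ^f)` of words over the finite alphabet `A`
of its sum-indecomposables — with the weight-one letter `one` below every letter and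
each forbidden word `φ i` nonempty and minimal outside `C`.)
Let `X` be a word with `d_X` dominant loop blocks in its prefix decomposition, and `Y` a
word with `d_Y` dominant loop blocks in its suffix decomposition.  If `XY ∈ C`, then
`d_X + d_Y ≤ D + 1`. -/
theorem domCount_concat_le {A : Type*} [Fintype A] {w : A → ℕ}
    (E : EmbeddingOrder A w) {f : ℕ} (φ : Fin f → List A)
    (hw : ∀ a, 0 < w a)
    (one : A) (hone : w one = 1) (hone_le : ∀ a : A, E.le [one] [a])
    (hf : 0 < f) (hφne : ∀ i, φ i ≠ [])
    (hφmin : ∀ i ψ, E.le ψ (φ i) → ψ ≠ φ i → ψ ∈ E.Cset φ)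
    (hunb : ¬ ∃ M : ℕ, ∀ n : ℕ,
      Set.ncard {W : List A | W ∈ E.Cset φ ∧ EmbeddingOrder.wt w W = n} ≤ M)
    (X Y : List A) (hXY : X ++ Y ∈ E.Cset φ) :
    E.domCountP φ X + E.domCountS φ Y ≤ E.Dmax φ + 1 :=
  domCount_concat_le_general E φ X Y hXY
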